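/- arXiv:2512.06587 — 4 statements merged into one kernel-verified Lean document; each statement's English description precedes it below -/
import Mathlib

section
/- For every integer l ≥ 9, the expectation of d_l under the probability function Q_l is strictly positive: Σ_{j=1}^{τ} d_l(j) · Q_l(j) > 0, where τ = ⌊l/3⌋. -/
/-- `h_l(j) = (l+j)/(l-j)` as a rational number. -/
def hFn (l j : ℕ) : ℚ := ((l : ℚ) + j) / ((l : ℚ) - j)

/-- `g_l(j) = ((l+j)^(2j))² / ((l+3j)^(2j) · (l−j)^(2j))` as a rational number, where
`x^(m)` denotes the descending factorial `x(x−1)⋯(x−m+1)`. -/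
def gFn (l j : ℕ) : ℚ :=
  ((Nat.descFactorial (l + j) (2 * j) : ℚ)) ^ 2 /
    ((Nat.descFactorial (l + 3 * j) (2 * j) : ℚ) * (Nat.descFactorial (l - j) (2 * j) : ℚ))

/-- `d_l(j) = g_l(j) − h_l(j)`. -/
def dFn (l j : ℕ) : ℚ := gFn l j - hFn l j

/-- `C_l(j) = (j(l−j)/(l+j)²) · binom(2(l+j)−1, l+j−1) · binom(4l−1−2(l+j), l+j−1)`. -/
def cFn (l j : ℕ) : ℚ :=
  ((j : ℚ) * ((l : ℚ) - j) / ((l : ℚ) + j) ^ 2) *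
    (Nat.choose (2 * (l + j) - 1) (l + j - 1) : ℚ) *
    (Nat.choose (4 * l - 1 - 2 * (l + j)) (l + j - 1) : ℚ)

/-- The probability function `Q_l(j) = C_l(j) / Σ_{i=1}^{τ} C_l(i)`, with `τ = ⌊l/3⌋`. -/
def qFn (l j : ℕ) : ℚ := cFn l j / ∑ i ∈ Finset.Icc 1 (l / 3), cFn l i

/-!
Put `a = l + j` and `b = l - j`. Up to elementary factors `C_l(j)` is the weight
`w a b = (2a)! (2b)! / (a!³ (2b - a)!)`, and multiplication by `g_l(j)` swaps `a` and `b`.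
Hence `8 d_l(j) C_l(j)` is the sum of `s a b = (b - a) / b * w a b` and `s b a`, and
`8 ∑ d_l(j) C_l(j)` becomes the sum of `s a (2l - a)` over all integers `a` with `|a - l| ≤ τ`.
The weight is hypergeometric along the line `a + b = 2l`. Multiplying it by a suitable polynomial
gives a sequence whose forward differences lie below a fixed positive multiple of the summand, so
that the sum telescopes to a boundary term. That term vanishes at the upper end, where
`2b < a` forces `w a b = 0`, and has the right sign at the lower end.
-/

section Casts

variable {n k : ℕ}

lemma cast_choose_mul_cast_sub (n k : ℕ) :
    (n.choose k : ℚ) * (n - k : ℕ) = n.choose k * (n - k) := by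
  obtain hkn | hnk := le_or_gt k n
  · rw [Nat.cast_sub hkn]
  · simp [Nat.choose_eq_zero_of_lt hnk]

lemma cast_choose_succ_mul (n k : ℕ) :
    (n.choose (k + 1) : ℚ) * (k + 1) = n.choose k * (n - k) := by
  rw [← cast_choose_mul_cast_sub]
  exact_mod_cast Nat.choose_succ_right_eq n k

lemma cast_succ_choose_mul (n k : ℕ) :
    ((n + 1).choose k : ℚ) * (n + 1 - k) = n.choose k * (n + 1) := by
  have := cast_choose_mul_cast_sub (n + 1) k
  rw [Nat.cast_succ] at this
  rw [← this]
  exact_mod_cast (Nat.choose_mul_succ_eq n k).symm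

lemma cast_choose_pred_pred (hn : 0 < n) (hk : 0 < k) :
    ((n - 1).choose (k - 1) : ℚ) = k / n * n.choose k := by
  obtain ⟨n, rfl⟩ := Nat.exists_eq_add_one.mpr hn
  obtain ⟨k, rfl⟩ := Nat.exists_eq_add_one.mpr hk
  have := congrArg (Nat.cast (R := ℚ)) (Nat.add_one_mul_choose_eq n k)
  push_cast at this ⊢
  field_simp
  linarith

lemma cast_descFactorial_eq_div (hkn : k ≤ n) :
    (n.descFactorial k : ℚ) = n.factorial / (n - k).factorial := by
  rw [eq_div_iff (by positivity), mul_comm]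
  exact_mod_cast Nat.factorial_mul_descFactorial hkn

end Casts

section Fold

variable {M : Type*} [AddCommMonoid M]

lemma sum_Ico_sub_add_eq_add_sum_Icc (f : ℕ → M) {l t : ℕ} (ht : t ≤ l) :
    ∑ a ∈ Finset.Ico (l - t) (l + t + 1), f a =
      f l + ∑ j ∈ Finset.Icc 1 t, (f (l + j) + f (l - j)) := by
  induction t with
  | zero => simp
  | succ t ih =>
    rw [Finset.sum_Ico_succ_top (by lia), Finset.sum_eq_sum_Ico_succ_bot (by lia),
      show l - (t + 1) + 1 = l - t by lia, show l + (t + 1) = l + t + 1 by rfl, ih (by lia),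
      Finset.sum_Icc_succ_top (by lia)]
    simp only [← add_assoc]
    abel

end Fold

section PairWeight

/-- The hypergeometric weight `(2a)! (2b)! / (a!³ (2b - a)!)`, which is proportional to `C_l(j)`
for `a = l + j` and `b = l - j`. Writing it with binomial coefficients makes it vanish for
`a > 2b`, in accordance with the convention `1 / (negative)! = 0`. -/
def pairWeight (a b : ℕ) : ℚ := a.centralBinom * (2 * b).choose a

variable {a b : ℕ}

lemma pairWeight_pos (hab : a ≤ 2 * b) : 0 < pairWeight a b := by
  have := a.centralBinom_pos
  have := Nat.choose_pos hab
  unfold pairWeight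
  positivity

lemma pairWeight_nonneg (a b : ℕ) : 0 ≤ pairWeight a b := by
  unfold pairWeight
  positivity

lemma pairWeight_eq_zero (hba : 2 * b < a) : pairWeight a b = 0 := by
  simp [pairWeight, Nat.choose_eq_zero_of_lt hba]

lemma pairWeight_eq_factorial_div (hab : a ≤ 2 * b) :
    pairWeight a b =
      (2 * a).factorial * (2 * b).factorial / (a.factorial ^ 3 * (2 * b - a).factorial) := by
  rw [pairWeight, Nat.centralBinom_eq_two_mul_choose, Nat.cast_choose ℚ hab,
    Nat.cast_choose ℚ (by lia : a ≤ 2 * a), show 2 * a - a = a by lia]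
  field_simp

lemma pairWeight_succ_left (a b : ℕ) :
    ((a : ℚ) + 1) ^ 2 * (b + 1) * (2 * b + 1) * pairWeight (a + 1) b =
      (2 * a + 1) * (2 * b + 2 - a) * (2 * b + 1 - a) * (2 * b - a) * pairWeight a (b + 1) := by
  have central : ((a : ℚ) + 1) * (a + 1).centralBinom = 2 * (2 * a + 1) * a.centralBinom := by
    exact_mod_cast a.succ_mul_centralBinom_succ
  have right := cast_choose_succ_mul (2 * b) a
  have left := cast_succ_choose_mul (2 * b) a
  have left' := cast_succ_choose_mul (2 * b + 1) a
  push_cast at right left left'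
  simp only [pairWeight, show 2 * (b + 1) = 2 * b + 1 + 1 by ring]
  calc ((a : ℚ) + 1) ^ 2 * (b + 1) * (2 * b + 1) *
        ((a + 1).centralBinom * (2 * b).choose (a + 1))
      = (((a : ℚ) + 1) * (a + 1).centralBinom) * ((2 * b).choose (a + 1) * (a + 1)) *
          ((b + 1) * (2 * b + 1)) := by ring
    _ = (2 * a + 1) * a.centralBinom * (2 * b - a) * ((2 * b).choose a * (2 * b + 1)) *
          (2 * b + 1 + 1) := by rw [central, right]; ring
    _ = (2 * a + 1) * a.centralBinom * (2 * b - a) * (2 * b + 1 - a) *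
          ((2 * b + 1).choose a * (2 * b + 1 + 1)) := by rw [← left]; ring
    _ = _ := by rw [← left']; ring

end PairWeight

section Folding

variable {l j : ℕ}

lemma gFn_mul_pairWeight (hj : 3 * j ≤ l) :
    gFn l j * pairWeight (l + j) (l - j) = pairWeight (l - j) (l + j) := by
  rw [gFn, pairWeight_eq_factorial_div (by lia), pairWeight_eq_factorial_div (by lia),
    cast_descFactorial_eq_div (by lia), cast_descFactorial_eq_div (by lia),
    cast_descFactorial_eq_div (by lia), show l + j - 2 * j = l - j by lia,
    show l + 3 * j - 2 * j = l + j by lia, show 2 * (l - j) - (l + j) = l - j - 2 * j by lia,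
    show 2 * (l + j) - (l - j) = l + 3 * j by lia]
  field_simp

lemma cFn_eq_pairWeight (hj : j < l) :
    cFn l j = j / (4 * (l + j)) * pairWeight (l + j) (l - j) := by
  have hsub : ((l - j : ℕ) : ℚ) = l - j := Nat.cast_sub hj.le
  have hpos : (0 : ℚ) < l - j := by rw [← hsub]; exact_mod_cast Nat.sub_pos_of_lt hj
  have hl : (0 : ℚ) < l := by exact_mod_cast (Nat.zero_le j).trans_lt hj
  rw [cFn, show 4 * l - 1 - 2 * (l + j) = 2 * (l - j) - 1 by lia,
    cast_choose_pred_pred (by lia) (by lia), cast_choose_pred_pred (by lia) (by lia),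
    pairWeight, Nat.centralBinom_eq_two_mul_choose]
  push_cast [hsub]
  field_simp
  ring

lemma cFn_pos (hj : 0 < j) (hjl : 3 * j ≤ l) : 0 < cFn l j := by
  have := pairWeight_pos (show l + j ≤ 2 * (l - j) by lia)
  rw [cFn_eq_pairWeight (by lia)]
  positivity

/-- The summand `(b - a) / b * w a b` into which `8 d_l(j) C_l(j)` splits, where `w` is
`pairWeight`. -/
def signedWeight (a b : ℕ) : ℚ := ((b : ℚ) - a) / b * pairWeight a b

lemma signedWeight_self (a : ℕ) : signedWeight a a = 0 := by simp [signedWeight]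

lemma eight_mul_dFn_mul_cFn (hj : j < l) (hjl : 3 * j ≤ l) :
    8 * (dFn l j * cFn l j) = signedWeight (l + j) (l - j) + signedWeight (l - j) (l + j) := by
  have hsub : ((l - j : ℕ) : ℚ) = l - j := Nat.cast_sub hj.le
  have hpos : (0 : ℚ) < l - j := by rw [← hsub]; exact_mod_cast Nat.sub_pos_of_lt hj
  have hl : (0 : ℚ) < l := by exact_mod_cast (Nat.zero_le j).trans_lt hj
  rw [cFn_eq_pairWeight hj, signedWeight, signedWeight, ← gFn_mul_pairWeight hjl, dFn, hFn]
  push_cast [hsub]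
  field_simp
  ring

lemma eight_mul_sum_dFn_mul_cFn (hl : 0 < l) {t : ℕ} (ht : 3 * t ≤ l) :
    8 * ∑ j ∈ Finset.Icc 1 t, dFn l j * cFn l j =
      ∑ a ∈ Finset.Ico (l - t) (l + t + 1), signedWeight a (2 * l - a) := by
  rw [sum_Ico_sub_add_eq_add_sum_Icc _ (by lia), show 2 * l - l = l by lia, signedWeight_self,
    zero_add, Finset.mul_sum]
  refine Finset.sum_congr rfl fun j hj ↦ ?_
  have := (Finset.mem_Icc.mp hj).2
  rw [eight_mul_dFn_mul_cFn (by lia) (by lia), show 2 * l - (l + j) = l - j by lia,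
    show 2 * l - (l - j) = l + j by lia]

end Folding

section Certificate

/-- The polynomial factor of `certificate`, homogenized: `n ^ 4 * q (m / n)` with
`q v = 1 + 4v + 13v² + 44v³ + 36v⁴`. The coefficients were found by a numerical search for an
approximate solution `q` of the difference equation that would make the telescoping exact. -/
def certificatePoly (n m : ℚ) : ℚ :=
  n ^ 4 + 4 * n ^ 3 * m + 13 * n ^ 2 * m ^ 2 + 44 * n * m ^ 3 + 36 * m ^ 4

/-- The sequence (along a line `a + b = n`) whose forward differences bound the multiple
`n ^ 7 * (2n + 1)` of `signedWeight` from below. -/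
def certificate (a b : ℕ) : ℚ :=
  4 * a ^ 2 * (b + 1) * (2 * b + 1) * certificatePoly (a + b) (a - b - 1) * pairWeight a b

/-- The gap between the multiple of `signedWeight` and the forward difference of `certificate`,
multiplied by `b` and divided by `pairWeight a b`. -/
def residualPoly (a b : ℚ) : ℚ :=
  (b - a) * (a + b) ^ 7 * (2 * (a + b) + 1) +
    4 * b * (a ^ 2 * (b + 1) * (2 * b + 1) * certificatePoly (a + b) (a - b - 1) -
      (2 * a + 1) * (2 * b - a) * (2 * b - a - 1) * (2 * b - a - 2) *
        certificatePoly (a + b) (a - b + 1))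

variable {a b : ℕ}

lemma residualPoly_pos_of_ge (hba : b ≤ a) (hab : a ≤ 2 * b) (hsum : 18 ≤ a + b) :
    0 < residualPoly a b := by
  -- In the nonnegative variables `e = a - b` and `t = 2b - a`, suitably shifted, all coefficients
  -- of the polynomial are nonnegative.
  obtain ⟨e, rfl⟩ := Nat.exists_eq_add_of_le hba
  obtain ⟨t, rfl⟩ := Nat.exists_eq_add_of_le (show e ≤ b by lia)
  obtain he | he := lt_or_ge e 5
  · obtain ⟨s, rfl⟩ := Nat.exists_eq_add_of_le (show (19 - 3 * e) / 2 ≤ t by lia)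
    simp only [residualPoly, certificatePoly]
    interval_cases e <;> push_cast [Nat.reduceMul, Nat.reduceSub, Nat.reduceDiv] <;> ring_nf <;>
      positivity
  · obtain ⟨i, rfl⟩ := Nat.exists_eq_add_of_le he
    simp only [residualPoly, certificatePoly]
    push_cast
    ring_nf
    positivity

lemma residualPoly_pos_of_le (hab : a ≤ b) (hba : b ≤ 2 * a) (hsum : 18 ≤ a + b) :
    0 < residualPoly a b := by
  obtain ⟨e, rfl⟩ := Nat.exists_eq_add_of_le hab
  obtain ⟨t, rfl⟩ := Nat.exists_eq_add_of_le (show e ≤ a by lia)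
  obtain he | he := lt_or_ge e 4
  · obtain ⟨s, rfl⟩ := Nat.exists_eq_add_of_le (show (19 - 3 * e) / 2 ≤ t by lia)
    simp only [residualPoly, certificatePoly]
    interval_cases e <;> push_cast [Nat.reduceMul, Nat.reduceSub, Nat.reduceDiv] <;> ring_nf <;>
      positivity
  · obtain ⟨i, rfl⟩ := Nat.exists_eq_add_of_le he
    simp only [residualPoly, certificatePoly]
    push_cast
    ring_nf
    positivity

lemma residualPoly_pos (hab : a ≤ 2 * b) (hba : b ≤ 2 * a) (hsum : 18 ≤ a + b) :
    0 < residualPoly a b :=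
  (le_total b a).elim (residualPoly_pos_of_ge · hab hsum) (residualPoly_pos_of_le · hba hsum)

lemma signedWeight_sub_certificate_sub (a b : ℕ) :
    ((a : ℚ) + (b + 1)) ^ 7 * (2 * (a + (b + 1)) + 1) * signedWeight a (b + 1) -
        (certificate (a + 1) b - certificate a (b + 1)) =
      residualPoly a (b + 1) / (b + 1) * pairWeight a (b + 1) := by
  have next : certificate (a + 1) b = 4 * ((2 * a + 1) * (2 * b + 2 - a) * (2 * b + 1 - a) *
      (2 * b - a) * pairWeight a (b + 1)) * certificatePoly (a + (b + 1)) (a - b) := by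
    rw [← pairWeight_succ_left, certificate]
    push_cast
    ring_nf
  rw [next, certificate, signedWeight, residualPoly]
  push_cast
  field_simp
  ring_nf

lemma certificate_sub_certificate_lt (hab : a ≤ 2 * (b + 1)) (hba : b + 1 ≤ 2 * a)
    (hsum : 18 ≤ a + (b + 1)) :
    certificate (a + 1) b - certificate a (b + 1) <
      ((a : ℚ) + (b + 1)) ^ 7 * (2 * (a + (b + 1)) + 1) * signedWeight a (b + 1) := by
  have hres : 0 < residualPoly a (b + 1) := by exact_mod_cast residualPoly_pos hab hba hsum
  have hw := pairWeight_pos hab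
  rw [← sub_pos, signedWeight_sub_certificate_sub]
  positivity

lemma certificate_eq_zero (hba : 2 * b < a) : certificate a b = 0 := by
  rw [certificate, pairWeight_eq_zero hba, mul_zero]

lemma certificatePoly_neg_nonpos {n m : ℚ} (hn : 7 * n ≤ 22 * m) (hm : 18 * m ≤ 7 * n) :
    certificatePoly n (-m) ≤ 0 := by
  obtain ⟨x, hx⟩ : ∃ x, x = 22 * m - 7 * n := ⟨_, rfl⟩
  obtain ⟨y, hy⟩ : ∃ y, y = 7 * n - 18 * m := ⟨_, rfl⟩
  have hx0 : 0 ≤ x := by linarith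
  have hy0 : 0 ≤ y := by linarith
  obtain rfl : m = (x + y) / 4 := by linarith
  obtain rfl : n = (9 * x + 11 * y) / 14 := by linarith
  rw [← neg_nonneg, certificatePoly]
  ring_nf
  positivity

lemma certificate_nonpos (ha : 29 * a ≤ 15 * b + 22) (hb : 11 * b + 18 ≤ 25 * a) :
    certificate a b ≤ 0 := by
  have hpoly : certificatePoly (a + b) (a - b - 1) ≤ 0 := by
    have ha' : 29 * (a : ℚ) ≤ 15 * b + 22 := by exact_mod_cast ha
    have hb' : 11 * (b : ℚ) + 18 ≤ 25 * a := by exact_mod_cast hb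
    rw [show (a : ℚ) - b - 1 = -(b + 1 - a) by ring]
    exact certificatePoly_neg_nonpos (by linarith) (by linarith)
  exact mul_nonpos_of_nonpos_of_nonneg (mul_nonpos_of_nonneg_of_nonpos (by positivity) hpoly)
    (pairWeight_nonneg a b)

end Certificate

section Positivity

variable {l : ℕ}

lemma certificate_sub_certificate_lt_signedWeight (hl : 9 ≤ l) {a : ℕ} (ha : l - l / 3 ≤ a)
    (ha' : a ≤ l + l / 3) :
    certificate (a + 1) (2 * l - (a + 1)) - certificate a (2 * l - a) <
      (2 * l : ℚ) ^ 7 * (4 * l + 1) * signedWeight a (2 * l - a) := by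
  obtain ⟨b, hb⟩ := Nat.exists_eq_add_of_le (show a + 1 ≤ 2 * l by lia)
  have hsum : (a : ℚ) + (b + 1) = 2 * l := by
    rw [show (2 : ℚ) * l = (2 * l : ℕ) by push_cast; rfl, hb]
    push_cast
    ring
  rw [show 2 * l - (a + 1) = b by lia, show 2 * l - a = b + 1 by lia]
  refine (certificate_sub_certificate_lt (by lia) (by lia) (by lia)).trans_eq ?_
  rw [hsum]
  ring

lemma sum_signedWeight_pos (hl : 9 ≤ l) :
    0 < ∑ a ∈ Finset.Ico (l - l / 3) (l + l / 3 + 1), signedWeight a (2 * l - a) := by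
  have upper : certificate (l + l / 3 + 1) (2 * l - (l + l / 3 + 1)) = 0 :=
    certificate_eq_zero (by lia)
  have lower : certificate (l - l / 3) (2 * l - (l - l / 3)) ≤ 0 :=
    certificate_nonpos (by lia) (by lia)
  have scaled : 0 < (2 * l : ℚ) ^ 7 * (4 * l + 1) *
      ∑ a ∈ Finset.Ico (l - l / 3) (l + l / 3 + 1), signedWeight a (2 * l - a) :=
    calc 0 ≤ certificate (l + l / 3 + 1) (2 * l - (l + l / 3 + 1)) -
          certificate (l - l / 3) (2 * l - (l - l / 3)) := by rw [upper]; linarith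
      _ = ∑ a ∈ Finset.Ico (l - l / 3) (l + l / 3 + 1),
          (certificate (a + 1) (2 * l - (a + 1)) - certificate a (2 * l - a)) :=
        (Finset.sum_Ico_sub (fun a ↦ certificate a (2 * l - a)) (by lia)).symm
      _ < ∑ a ∈ Finset.Ico (l - l / 3) (l + l / 3 + 1),
          (2 * l : ℚ) ^ 7 * (4 * l + 1) * signedWeight a (2 * l - a) :=
        Finset.sum_lt_sum_of_nonempty (Finset.nonempty_Ico.mpr (by lia)) fun a ha ↦ by
          rw [Finset.mem_Ico] at ha
          exact certificate_sub_certificate_lt_signedWeight hl ha.1 (by lia)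
      _ = _ := (Finset.mul_sum ..).symm
  exact pos_of_mul_pos_right scaled (by positivity)

lemma sum_dFn_mul_cFn_pos (hl : 9 ≤ l) : 0 < ∑ j ∈ Finset.Icc 1 (l / 3), dFn l j * cFn l j := by
  have := sum_signedWeight_pos hl
  rw [← eight_mul_sum_dFn_mul_cFn (by lia) (by lia)] at this
  linarith

lemma sum_cFn_pos (hl : 3 ≤ l) : 0 < ∑ j ∈ Finset.Icc 1 (l / 3), cFn l j :=
  Finset.sum_pos (fun j hj ↦ by rw [Finset.mem_Icc] at hj; exact cFn_pos (by lia) (by lia))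
    (Finset.nonempty_Icc.mpr (by lia))

end Positivity

/-- For every integer `l ≥ 9`, with `τ = ⌊l/3⌋`, the expectation of `d_l` under the
probability function `Q_l` is strictly positive: `Σ_{j=1}^{τ} d_l(j) Q_l(j) > 0`. -/
theorem stmt16 (l : ℕ) (hl : 9 ≤ l) :
    0 < ∑ j ∈ Finset.Icc 1 (l / 3), dFn l j * qFn l j := by
  simp only [qFn, ← mul_div_assoc, ← Finset.sum_div]
  exact div_pos (sum_dFn_mul_cFn_pos hl) (sum_cFn_pos (by lia))
end

section
/- Define, for integers a ≥ 2, L(a) = (4a²+a−1)^(2a+1) · (4a²+a)^(2a+2) / ( (4a²−a−3)^(2a+1) · (4a²+3a+2)^(2a+2) ) − 1, where x^(m) denotes the descending factorial. Then, with α = 1/a, as a → ∞ one has log(1 + L(a)) = α² + (19/12)α³ + o(α³), and consequently L(a) = α² + (19/12)α³ + o(α³). -/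
open Filter Asymptotics

/-- `L(a) = (4a²+a−1)^(2a+1)(4a²+a)^(2a+2) / ((4a²−a−3)^(2a+1)(4a²+3a+2)^(2a+2)) − 1`,
where `x^(m)` denotes the descending factorial. -/
def Lfn (a : ℕ) : ℚ :=
  ((Nat.descFactorial (4 * a ^ 2 + a - 1) (2 * a + 1) : ℚ) *
      (Nat.descFactorial (4 * a ^ 2 + a) (2 * a + 2) : ℚ)) /
    ((Nat.descFactorial (4 * a ^ 2 - a - 3) (2 * a + 1) : ℚ) *
      (Nat.descFactorial (4 * a ^ 2 + 3 * a + 2) (2 * a + 2) : ℚ)) - 1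

/-!
Each descending factorial is a product of `2a + O(1)` factors that all lie within `O(a)` of
`N = 4a²`. Expanding the logarithm of each factor around `N` to fourth order leaves an error
`O(a · (a / N)⁵) = O(a⁻⁴)`, and the power sums that appear have closed forms in terms of Bernoulli
polynomials. The four terms `m log N` cancel, and what remains is a rational function of `a` whose
expansion starts with `a⁻² + (19/12) a⁻³`. Since `log (1 + L) = O(a⁻²)`, replacing it by `L` costs
only `O(a⁻⁴)`.
-/

section BernoulliPolynomials

lemma bernoulliFun_one_add (k : ℕ) (x : ℝ) :
    bernoulliFun k (1 + x) = bernoulliFun k x + k * x ^ (k - 1) := by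
  simpa [bernoulliFun, Polynomial.aeval_comp]
    using congr_arg (Polynomial.aeval x) (Polynomial.bernoulli_comp_one_add_X k)

lemma sum_range_add_natCast_pow (k m : ℕ) (t : ℝ) :
    ∑ i ∈ Finset.range m, (t + i) ^ k =
      (bernoulliFun (k + 1) (t + m) - bernoulliFun (k + 1) t) / (k + 1) := by
  have forward_difference (i : ℕ) : (t + i) ^ k =
      bernoulliFun (k + 1) (t + (i + 1 : ℕ)) / (k + 1) -
        bernoulliFun (k + 1) (t + i) / (k + 1) := by
    rw [show t + ((i + 1 : ℕ) : ℝ) = 1 + (t + i) by push_cast; ring, bernoulliFun_one_add,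
      Nat.add_sub_cancel]
    push_cast
    field_simp
    ring
  simp_rw [forward_difference,
    Finset.sum_range_sub (fun i : ℕ ↦ bernoulliFun (k + 1) (t + i) / (k + 1)),
    Nat.cast_zero, add_zero, sub_div]

lemma bernoulliFun_eq_sum (n : ℕ) (x : ℝ) :
    bernoulliFun n x =
      ∑ i ∈ Finset.range (n + 1), (bernoulli (n - i) : ℝ) * n.choose i * x ^ i := by
  simp [bernoulliFun, Polynomial.bernoulli_def, Polynomial.map_sum, Polynomial.eval_finsetSum]

lemma bernoulli_three : bernoulli 3 = 0 :=
  bernoulli_eq_zero_of_odd (by decide) (by norm_num)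

lemma bernoulli_four : bernoulli 4 = -1 / 30 := by
  rw [bernoulli_eq_bernoulli'_of_ne_one (by norm_num), bernoulli'_four]

lemma bernoulli_five : bernoulli 5 = 0 :=
  bernoulli_eq_zero_of_odd (by decide) (by norm_num)

lemma bernoulliFun_three (x : ℝ) : bernoulliFun 3 x = x ^ 3 - 3 / 2 * x ^ 2 + x / 2 := by
  simp only [bernoulliFun_eq_sum, Finset.sum_range_succ, Finset.sum_range_zero, Nat.reduceSub,
    bernoulli_zero, bernoulli_one, bernoulli_two, bernoulli_three, Nat.choose]
  push_cast
  ring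

lemma bernoulliFun_four (x : ℝ) : bernoulliFun 4 x = x ^ 4 - 2 * x ^ 3 + x ^ 2 - 1 / 30 := by
  simp only [bernoulliFun_eq_sum, Finset.sum_range_succ, Finset.sum_range_zero, Nat.reduceSub,
    bernoulli_zero, bernoulli_one, bernoulli_two, bernoulli_three, bernoulli_four, Nat.choose]
  push_cast
  ring

lemma bernoulliFun_five (x : ℝ) :
    bernoulliFun 5 x = x ^ 5 - 5 / 2 * x ^ 4 + 5 / 3 * x ^ 3 - x / 6 := by
  simp only [bernoulliFun_eq_sum, Finset.sum_range_succ, Finset.sum_range_zero, Nat.reduceSub,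
    bernoulli_zero, bernoulli_one, bernoulli_two, bernoulli_three, bernoulli_four, bernoulli_five,
    Nat.choose]
  push_cast
  ring

end BernoulliPolynomials

section LogDescFactorial

/-- The sum over `i < m` of the values at `u = (t + i) / N` of the degree-`n` Taylor polynomial
`∑_{k < n} u ^ (k + 1) / (k + 1)` of `-log (1 - u)`. With `t = N - x` it approximates
`m log N - log (x.descFactorial m)`, because `x - i = N (1 - (t + i) / N)`. -/
noncomputable def negLogTaylorSum (n : ℕ) (N t : ℝ) (m : ℕ) : ℝ :=
  ∑ i ∈ Finset.range m, ∑ k ∈ Finset.range n, ((t + i) / N) ^ (k + 1) / (k + 1)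

lemma negLogTaylorSum_eq_sum_bernoulliFun (n : ℕ) (N t : ℝ) (m : ℕ) :
    negLogTaylorSum n N t m = ∑ k ∈ Finset.range n,
      (bernoulliFun (k + 2) (t + m) - bernoulliFun (k + 2) t) /
        ((k + 1) * (k + 2) * N ^ (k + 1)) := by
  rw [negLogTaylorSum, Finset.sum_comm]
  refine Finset.sum_congr rfl fun k _ ↦ ?_
  simp_rw [div_pow, ← Finset.sum_div, sum_range_add_natCast_pow, div_div]
  push_cast
  ring

lemma log_descFactorial_eq_sum {x m : ℕ} (h : m ≤ x) :
    Real.log (x.descFactorial m) = ∑ i ∈ Finset.range m, Real.log ((x : ℝ) - i) := by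
  have factor_ne_zero : ∀ i ∈ Finset.range m, (x : ℝ) - i ≠ 0 := fun i hi ↦
    (sub_pos.2 (Nat.cast_lt.2 ((Finset.mem_range.1 hi).trans_le h))).ne'
  rw [Nat.descFactorial_eq_prod_range, ← Finset.prod_range_natCast_sub,
    Real.log_prod factor_ne_zero]

lemma abs_log_descFactorial_sub_le (n : ℕ) {x m : ℕ} {N b : ℝ} (hN : 0 < N) (hb : b < 1)
    (h : |N - x| + m ≤ b * N) :
    |Real.log (x.descFactorial m) - (m * Real.log N - negLogTaylorSum n N (N - x) m)| ≤
      m * (b ^ (n + 1) / (1 - b)) := by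
  have hmx : m ≤ x := by
    have : (m : ℝ) ≤ x := by nlinarith [le_abs_self (N - x)]
    exact_mod_cast this
  set v : ℕ → ℝ := fun i ↦ (N - x + i) / N with hv
  have abs_v_le : ∀ i ∈ Finset.range m, |v i| ≤ b := fun i hi ↦ by
    have him : (i : ℝ) ≤ m := by exact_mod_cast (Finset.mem_range.1 hi).le
    rw [hv, abs_div, abs_of_pos hN, div_le_iff₀ hN]
    calc |N - x + i| ≤ |N - x| + |(i : ℝ)| := abs_add_le _ _
      _ ≤ |N - x| + m := by rw [Nat.abs_cast]; gcongr
      _ ≤ b * N := h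
  have log_factor : ∀ i ∈ Finset.range m,
      Real.log ((x : ℝ) - i) = Real.log N + Real.log (1 - v i) := fun i hi ↦ by
    have : 0 < 1 - v i := by linarith [le_abs_self (v i), abs_v_le i hi]
    rw [← Real.log_mul hN.ne' this.ne', hv]
    congr 1
    field_simp
    ring
  rw [log_descFactorial_eq_sum hmx, Finset.sum_congr rfl log_factor, Finset.sum_add_distrib,
    Finset.sum_const, Finset.card_range, nsmul_eq_mul, negLogTaylorSum, add_sub_sub_cancel,
    add_comm, ← Finset.sum_add_distrib]
  calc |∑ i ∈ Finset.range m,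
          (∑ k ∈ Finset.range n, v i ^ (k + 1) / (k + 1) + Real.log (1 - v i))|
      ≤ ∑ i ∈ Finset.range m, |v i| ^ (n + 1) / (1 - |v i|) :=
        (Finset.abs_sum_le_sum_abs _ _).trans <| Finset.sum_le_sum fun i hi ↦
          Real.abs_log_sub_add_sum_range_le ((abs_v_le i hi).trans_lt hb) n
    _ ≤ ∑ _i ∈ Finset.range m, b ^ (n + 1) / (1 - b) := by
        refine Finset.sum_le_sum fun i hi ↦ ?_
        have hvb := abs_v_le i hi
        have : 0 ≤ b := (abs_nonneg _).trans hvb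
        have : 0 < 1 - b := sub_pos.2 hb
        gcongr
    _ = m * (b ^ (n + 1) / (1 - b)) := by simp

lemma log_descFactorial_sub_isBigO {ι : Type*} {l : Filter ι} (n : ℕ) {x m : ι → ℕ} {N r : ι → ℝ}
    (hN : ∀ᶠ i in l, 0 < N i) (hx : (fun i ↦ N i - x i) =O[l] r)
    (hm : (fun i ↦ (m i : ℝ)) =O[l] r) (hr : r =o[l] N) :
    (fun i ↦ Real.log ((x i).descFactorial (m i)) -
        (m i * Real.log (N i) - negLogTaylorSum n (N i) (N i - x i) (m i)))
      =O[l] fun i ↦ r i ^ (n + 2) / N i ^ (n + 1) := by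
  set b : ι → ℝ := fun i ↦ (|N i - x i| + m i) / N i
  have b_isBigO : b =O[l] fun i ↦ r i / N i := (hx.abs_left.add hm).mul (isBigO_refl _ l)
  have b_tendsto : Tendsto b l (nhds 0) := b_isBigO.trans_tendsto hr.tendsto_div_nhds_zero
  have error_isBigO : (fun i ↦ Real.log ((x i).descFactorial (m i)) -
        (m i * Real.log (N i) - negLogTaylorSum n (N i) (N i - x i) (m i)))
      =O[l] fun i ↦ m i * b i ^ (n + 1) := by
    refine IsBigO.of_bound 2 ?_
    filter_upwards [hN, b_tendsto.eventually_lt_const one_half_pos] with i hNi hbi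
    have : 0 ≤ b i := by positivity
    rw [Real.norm_eq_abs, Real.norm_of_nonneg (by positivity)]
    calc _ ≤ m i * (b i ^ (n + 1) / (1 - b i)) :=
          abs_log_descFactorial_sub_le n hNi (hbi.trans one_half_lt_one)
            (div_mul_cancel₀ (|N i - x i| + m i) hNi.ne').ge
      _ ≤ m i * (b i ^ (n + 1) / (1 / 2)) := by gcongr; linarith
      _ = 2 * (m i * b i ^ (n + 1)) := by ring
  refine (error_isBigO.trans (hm.mul (b_isBigO.pow (n + 1)))).congr_right fun i ↦ ?_
  rw [div_pow]
  ring

end LogDescFactorial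

lemma isBigO_sub_log_one_add {ι : Type*} {l : Filter ι} {f : ι → ℝ}
    (hf : ∀ᶠ i in l, 0 < 1 + f i) (hlog : Tendsto (fun i ↦ Real.log (1 + f i)) l (nhds 0)) :
    (fun i ↦ f i - Real.log (1 + f i)) =O[l] fun i ↦ Real.log (1 + f i) ^ 2 := by
  refine ((Real.exp_sub_sum_range_isBigO_pow 2).comp_tendsto hlog).congr' ?_ .rfl
  filter_upwards [hf] with i hi
  simp [Finset.sum_range_succ, Real.exp_log hi, ← sub_sub]

section NatCastPowers

lemma natCast_pow_isLittleO {j k : ℕ} (h : j < k) :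
    (fun a : ℕ ↦ (a : ℝ) ^ j) =o[atTop] fun a : ℕ ↦ (a : ℝ) ^ k :=
  (isLittleO_pow_pow_atTop_of_lt h).comp_tendsto tendsto_natCast_atTop_atTop

lemma one_div_natCast_pow_isLittleO {j k : ℕ} (h : j < k) :
    (fun a : ℕ ↦ 1 / (a : ℝ) ^ k) =o[atTop] fun a : ℕ ↦ 1 / (a : ℝ) ^ j := by
  simp_rw [one_div]
  refine (natCast_pow_isLittleO h).inv_rev ?_
  filter_upwards [eventually_gt_atTop 0] with a ha h_zero
  exact absurd h_zero (by positivity)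

lemma const_mul_natCast_add_const_isBigO (p q : ℝ) :
    (fun a : ℕ ↦ p * (a : ℝ) + q) =O[atTop] fun a : ℕ ↦ (a : ℝ) :=
  ((isBigO_refl _ _).const_mul_left p).add <| IsLittleO.isBigO <|
    isLittleO_const_left.2 <| .inr <| tendsto_norm_atTop_atTop.comp tendsto_natCast_atTop_atTop

end NatCastPowers

section Lfn

lemma log_descFactorial_sub_isBigO_of_four_mul_sq {x : ℕ → ℕ} {t : ℕ → ℝ} (s : ℕ)
    (ht : t =O[atTop] fun a : ℕ ↦ (a : ℝ))
    (hx : ∀ᶠ a in atTop, (x a : ℝ) = 4 * (a : ℝ) ^ 2 - t a) :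
    (fun a : ℕ ↦ Real.log ((x a).descFactorial (2 * a + s)) -
        ((2 * a + s : ℕ) * Real.log (4 * (a : ℝ) ^ 2) -
          negLogTaylorSum 4 (4 * (a : ℝ) ^ 2) (t a) (2 * a + s)))
      =O[atTop] fun a : ℕ ↦ 1 / (a : ℝ) ^ 4 := by
  have shift_eq : ∀ᶠ a : ℕ in atTop, 4 * (a : ℝ) ^ 2 - x a = t a :=
    hx.mono fun a ha ↦ by rw [ha, sub_sub_cancel]
  have shift_isBigO : (fun a : ℕ ↦ 4 * (a : ℝ) ^ 2 - x a) =O[atTop] fun a : ℕ ↦ (a : ℝ) :=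
    ht.congr' (shift_eq.mono fun _ ↦ Eq.symm) .rfl
  have length_isBigO : (fun a : ℕ ↦ ((2 * a + s : ℕ) : ℝ)) =O[atTop] fun a : ℕ ↦ (a : ℝ) := by
    simpa using const_mul_natCast_add_const_isBigO 2 s
  have centre_pos : ∀ᶠ a : ℕ in atTop, 0 < 4 * (a : ℝ) ^ 2 := by
    filter_upwards [eventually_gt_atTop 0] with a ha
    positivity
  have isLittleO_centre : (fun a : ℕ ↦ (a : ℝ)) =o[atTop] fun a : ℕ ↦ 4 * (a : ℝ) ^ 2 := by
    simpa only [pow_one] using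
      (natCast_pow_isLittleO one_lt_two).const_mul_right (four_ne_zero (α := ℝ))
  have error_isBigO : (fun a : ℕ ↦ (a : ℝ) ^ (4 + 2) / (4 * (a : ℝ) ^ 2) ^ (4 + 1))
      =O[atTop] fun a : ℕ ↦ 1 / (a : ℝ) ^ 4 := by
    refine ((isBigO_refl _ _).const_mul_left (1 / 4 ^ 5)).congr_left fun a ↦ ?_
    rcases eq_or_ne (a : ℝ) 0 with ha | ha
    · simp [ha]
    · field_simp
      ring
  refine ((log_descFactorial_sub_isBigO 4 centre_pos shift_isBigO length_isBigO
    isLittleO_centre).trans error_isBigO).congr' ?_ .rfl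
  filter_upwards [shift_eq] with a ha
  rw [ha]

lemma negLogTaylorSum_Lfn_eq {a : ℕ} (ha : a ≠ 0) :
    negLogTaylorSum 4 (4 * (a : ℝ) ^ 2) (a + 3) (2 * a + 1) +
        negLogTaylorSum 4 (4 * (a : ℝ) ^ 2) (-3 * a - 2) (2 * a + 2) -
        negLogTaylorSum 4 (4 * (a : ℝ) ^ 2) (1 - a) (2 * a + 1) -
        negLogTaylorSum 4 (4 * (a : ℝ) ^ 2) (-a) (2 * a + 2) =
      1 / (a : ℝ) ^ 2 + (19 / 12) / (a : ℝ) ^ 3 + (19 / 16 * (1 / (a : ℝ) ^ 4) +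
        161 / 128 * (1 / (a : ℝ) ^ 5) + 401 / 384 * (1 / (a : ℝ) ^ 6) +
        31 / 64 * (1 / (a : ℝ) ^ 7) + 3 / 32 * (1 / (a : ℝ) ^ 8)) := by
  simp only [negLogTaylorSum_eq_sum_bernoulliFun, Finset.sum_range_succ, Finset.sum_range_zero,
    Nat.reduceAdd, bernoulliFun_two, bernoulliFun_three, bernoulliFun_four, bernoulliFun_five]
  push_cast
  field_simp
  ring

lemma negLogTaylorSum_Lfn_sub_isBigO :
    (fun a : ℕ ↦ negLogTaylorSum 4 (4 * (a : ℝ) ^ 2) (a + 3) (2 * a + 1) +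
        negLogTaylorSum 4 (4 * (a : ℝ) ^ 2) (-3 * a - 2) (2 * a + 2) -
        negLogTaylorSum 4 (4 * (a : ℝ) ^ 2) (1 - a) (2 * a + 1) -
        negLogTaylorSum 4 (4 * (a : ℝ) ^ 2) (-a) (2 * a + 2) -
        (1 / (a : ℝ) ^ 2 + (19 / 12) / (a : ℝ) ^ 3))
      =O[atTop] fun a : ℕ ↦ 1 / (a : ℝ) ^ 4 := by
  have tail_isBigO (c : ℝ) {k : ℕ} (hk : 4 < k) :
      (fun a : ℕ ↦ c * (1 / (a : ℝ) ^ k)) =O[atTop] fun a : ℕ ↦ 1 / (a : ℝ) ^ 4 :=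
    (one_div_natCast_pow_isLittleO hk).isBigO.const_mul_left c
  refine (((((isBigO_refl _ _).const_mul_left (19 / 16)).add
    (tail_isBigO (161 / 128) (k := 5) (by norm_num))).add
    (tail_isBigO (401 / 384) (k := 6) (by norm_num))).add
    (tail_isBigO (31 / 64) (k := 7) (by norm_num))).add
    (tail_isBigO (3 / 32) (k := 8) (by norm_num)) |>.congr' ?_ .rfl
  filter_upwards [eventually_ne_atTop 0] with a ha
  rw [negLogTaylorSum_Lfn_eq ha, add_sub_cancel_left]

lemma one_add_Lfn (a : ℕ) :
    1 + ((Lfn a : ℚ) : ℝ) =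
      ((4 * a ^ 2 + a - 1).descFactorial (2 * a + 1) * (4 * a ^ 2 + a).descFactorial (2 * a + 2)) /
        ((4 * a ^ 2 - a - 3).descFactorial (2 * a + 1) *
          (4 * a ^ 2 + 3 * a + 2).descFactorial (2 * a + 2)) := by
  simp [Lfn]

lemma Lfn_descFactorial_pos {a : ℕ} (ha : 2 ≤ a) :
    (0 < (4 * a ^ 2 + a - 1).descFactorial (2 * a + 1) ∧
      0 < (4 * a ^ 2 + a).descFactorial (2 * a + 2)) ∧
    (0 < (4 * a ^ 2 - a - 3).descFactorial (2 * a + 1) ∧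
      0 < (4 * a ^ 2 + 3 * a + 2).descFactorial (2 * a + 2)) := by
  have : 8 * a ≤ 4 * a ^ 2 := by nlinarith
  refine ⟨⟨?_, ?_⟩, ?_, ?_⟩ <;> exact Nat.descFactorial_pos.2 (by omega)

lemma one_add_Lfn_pos {a : ℕ} (ha : 2 ≤ a) : 0 < 1 + ((Lfn a : ℚ) : ℝ) := by
  obtain ⟨⟨h₁, h₂⟩, h₃, h₄⟩ := Lfn_descFactorial_pos ha
  rw [one_add_Lfn]
  positivity

lemma log_one_add_Lfn {a : ℕ} (ha : 2 ≤ a) :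
    Real.log (1 + ((Lfn a : ℚ) : ℝ)) =
      Real.log ((4 * a ^ 2 + a - 1).descFactorial (2 * a + 1)) +
        Real.log ((4 * a ^ 2 + a).descFactorial (2 * a + 2)) -
        Real.log ((4 * a ^ 2 - a - 3).descFactorial (2 * a + 1)) -
        Real.log ((4 * a ^ 2 + 3 * a + 2).descFactorial (2 * a + 2)) := by
  obtain ⟨⟨h₁, h₂⟩, h₃, h₄⟩ := Lfn_descFactorial_pos ha
  rw [one_add_Lfn, Real.log_div (by positivity) (by positivity),
    Real.log_mul (by positivity) (by positivity), Real.log_mul (by positivity) (by positivity),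
    sub_sub]

lemma log_one_add_Lfn_sub_isBigO :
    (fun a : ℕ ↦ Real.log (1 + ((Lfn a : ℚ) : ℝ))
        - (1 / (a : ℝ) ^ 2 + (19 / 12) / (a : ℝ) ^ 3))
      =O[atTop] (fun a : ℕ ↦ 1 / (a : ℝ) ^ 4) := by
  have num₁ := log_descFactorial_sub_isBigO_of_four_mul_sq (x := fun a ↦ 4 * a ^ 2 + a - 1)
    (t := fun a ↦ 1 - a) 1
    ((const_mul_natCast_add_const_isBigO (-1) 1).congr_left fun a ↦ by ring) <| by
      filter_upwards [eventually_ge_atTop 2] with a ha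
      rw [Nat.cast_sub (by omega)]
      push_cast
      ring
  have num₂ := log_descFactorial_sub_isBigO_of_four_mul_sq (x := fun a ↦ 4 * a ^ 2 + a)
    (t := fun a ↦ -a) 2 (isBigO_refl _ _).neg_left (.of_forall fun a ↦ by push_cast; ring)
  have den₁ := log_descFactorial_sub_isBigO_of_four_mul_sq (x := fun a ↦ 4 * a ^ 2 - a - 3)
    (t := fun a ↦ a + 3) 1
    ((const_mul_natCast_add_const_isBigO 1 3).congr_left fun a ↦ by ring) <| by
      filter_upwards [eventually_ge_atTop 2] with a ha
      have : a + 3 ≤ 4 * a ^ 2 := by nlinarith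
      rw [Nat.cast_sub (by omega), Nat.cast_sub (by omega)]
      push_cast
      ring
  have den₂ := log_descFactorial_sub_isBigO_of_four_mul_sq (x := fun a ↦ 4 * a ^ 2 + 3 * a + 2)
    (t := fun a ↦ -3 * a - 2) 2
    ((const_mul_natCast_add_const_isBigO (-3) (-2)).congr_left fun a ↦ by ring)
    (.of_forall fun a ↦ by push_cast; ring)
  refine ((((num₁.add num₂).sub den₁).sub den₂).add negLogTaylorSum_Lfn_sub_isBigO).congr' ?_ .rfl
  filter_upwards [eventually_ge_atTop 2] with a ha
  rw [log_one_add_Lfn ha]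
  ring

lemma log_one_add_Lfn_isBigO :
    (fun a : ℕ ↦ Real.log (1 + ((Lfn a : ℚ) : ℝ))) =O[atTop] fun a : ℕ ↦ 1 / (a : ℝ) ^ 2 := by
  have cubic_isBigO : (fun a : ℕ ↦ (19 / 12) / (a : ℝ) ^ 3) =O[atTop] fun a : ℕ ↦ 1 / (a : ℝ) ^ 2 :=
    ((one_div_natCast_pow_isLittleO (by norm_num)).isBigO.const_mul_left (19 / 12)).congr_left
      fun a ↦ mul_one_div _ _
  exact ((log_one_add_Lfn_sub_isBigO.trans (one_div_natCast_pow_isLittleO (by norm_num)).isBigO).add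
    ((isBigO_refl _ _).add cubic_isBigO)).congr_left fun a ↦ sub_add_cancel _ _

lemma Lfn_sub_isBigO :
    (fun a : ℕ ↦ ((Lfn a : ℚ) : ℝ) - (1 / (a : ℝ) ^ 2 + (19 / 12) / (a : ℝ) ^ 3))
      =O[atTop] (fun a : ℕ ↦ 1 / (a : ℝ) ^ 4) := by
  have one_div_sq_tendsto : Tendsto (fun a : ℕ ↦ 1 / (a : ℝ) ^ 2) atTop (nhds 0) :=
    tendsto_const_nhds.div_atTop
      ((tendsto_pow_atTop two_ne_zero).comp tendsto_natCast_atTop_atTop)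
  have sub_log_isBigO : (fun a : ℕ ↦ ((Lfn a : ℚ) : ℝ) - Real.log (1 + ((Lfn a : ℚ) : ℝ)))
      =O[atTop] fun a : ℕ ↦ 1 / (a : ℝ) ^ 4 :=
    ((isBigO_sub_log_one_add ((eventually_ge_atTop 2).mono fun _ ↦ one_add_Lfn_pos)
      (log_one_add_Lfn_isBigO.trans_tendsto one_div_sq_tendsto)).trans
      (log_one_add_Lfn_isBigO.pow 2)).congr_right fun a ↦ by ring
  exact (sub_log_isBigO.add log_one_add_Lfn_sub_isBigO).congr_left fun a ↦ sub_add_sub_cancel _ _ _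

end Lfn

/-- With `α = 1/a`, as `a → ∞`: `log(1 + L(a)) = α² + (19/12)α³ + o(α³)`, and
consequently `L(a) = α² + (19/12)α³ + o(α³)`. -/
theorem stmt17 :
    (fun a : ℕ => Real.log (1 + ((Lfn a : ℚ) : ℝ))
        - (1 / (a : ℝ) ^ 2 + (19 / 12) / (a : ℝ) ^ 3))
      =o[atTop] (fun a : ℕ => 1 / (a : ℝ) ^ 3) ∧
    (fun a : ℕ => ((Lfn a : ℚ) : ℝ)
        - (1 / (a : ℝ) ^ 2 + (19 / 12) / (a : ℝ) ^ 3))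
      =o[atTop] (fun a : ℕ => 1 / (a : ℝ) ^ 3) :=
  ⟨log_one_add_Lfn_sub_isBigO.trans_isLittleO (one_div_natCast_pow_isLittleO (by norm_num)),
    Lfn_sub_isBigO.trans_isLittleO (one_div_natCast_pow_isLittleO (by norm_num))⟩
end

section
/- Define, for integers a ≥ 2, R(a) = [ (32a²(a²−1) − 6)(4a+1)/(4a) ] / [ (4a²+2)(4a²+1)(4a²−3)(a+1) ] multiplied by the ratio of binomial coefficients binom(8a²−1, 4a²−1) · binom(8a²−5, 4a²−1) / ( binom(8a²+2a−1, 4a²+a−1) · binom(8a²−2a−5, 4a²+a−1) ). Then, with α = 1/a, as a → ∞ one has R(a) = (e/2)α³ + o(α³), where e is Euler's number. -/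
/-!
The binomial coefficients are all central on the scale of the local limit theorem: if
`m + n → ∞` and `(m - n)² / (m + n) → c`, then Stirling's formula gives
`binom(m + n, m) ∼ 2 ^ (m + n) √(2 / (π (m + n))) exp(-c / 2)`.
Each of the four has `m + n ∼ 8a²`, and the powers of `2` cancel in the ratio. Only the last one
is visibly off centre, with `m - n = 4a + 3`: there `c = 2`, while `c = 0` for the others, so the
ratio tends to `1 / exp(-1) = e`. The rational prefactor is `∼ α³ / 2`.
-/

open Filter Asymptotics

/-- The ratio of binomial coefficients
`binom(8a²−1, 4a²−1) binom(8a²−5, 4a²−1) / (binom(8a²+2a−1, 4a²+a−1) binom(8a²−2a−5, 4a²+a−1))`. -/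
noncomputable def binRatio (a : ℕ) : ℝ :=
  ((Nat.choose (8 * a ^ 2 - 1) (4 * a ^ 2 - 1) : ℝ) *
      (Nat.choose (8 * a ^ 2 - 5) (4 * a ^ 2 - 1) : ℝ)) /
    ((Nat.choose (8 * a ^ 2 + 2 * a - 1) (4 * a ^ 2 + a - 1) : ℝ) *
      (Nat.choose (8 * a ^ 2 - 2 * a - 5) (4 * a ^ 2 + a - 1) : ℝ))

/-- `R(a) = [(32a²(a²−1) − 6)(4a+1)/(4a)] / [(4a²+2)(4a²+1)(4a²−3)(a+1)]` times the
binomial-coefficient ratio `binRatio a`. -/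
noncomputable def Rfn (a : ℕ) : ℝ :=
  ((32 * (a : ℝ) ^ 2 * ((a : ℝ) ^ 2 - 1) - 6) * (4 * (a : ℝ) + 1) / (4 * (a : ℝ))) /
      ((4 * (a : ℝ) ^ 2 + 2) * (4 * (a : ℝ) ^ 2 + 1) * (4 * (a : ℝ) ^ 2 - 3) * ((a : ℝ) + 1)) *
    binRatio a

open Real Topology Stirling

theorem isLittleO_log_one_add_sub :
    (fun x : ℝ => log (1 + x) - (x - x ^ 2 / 2)) =o[𝓝 0] fun x => x ^ 2 := by
  refine IsBigO.trans_isLittleO (.of_bound 2 ?_)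
    (isLittleO_pow_pow (𝕜 := ℝ) (show 2 < 3 by norm_num))
  filter_upwards [Metric.closedBall_mem_nhds (0 : ℝ) (ε := 1 / 2) (by norm_num)] with x hx
  replace hx : |x| ≤ 1 / 2 := by simpa using hx
  have taylor : |log (1 + x) - (x - x ^ 2 / 2)| ≤ |x| ^ 3 / (1 - |x|) := by
    convert abs_log_sub_add_sum_range_le (x := -x) (by rw [abs_neg]; linarith) 2 using 2
    · norm_num [Finset.sum_range_succ]
      ring
    all_goals rw [abs_neg]
  rw [norm_eq_abs, norm_eq_abs, abs_pow]
  refine taylor.trans ?_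
  rw [div_le_iff₀ (by linarith)]
  nlinarith [pow_nonneg (abs_nonneg x) 3]

theorem isLittleO_mul_log_add_mul_log_sub_sq :
    (fun x : ℝ => (1 + x) * log (1 + x) + (1 - x) * log (1 - x) - x ^ 2)
      =o[𝓝 0] fun x => x ^ 2 := by
  have one_add_isBigO : (fun x : ℝ => 1 + x) =O[𝓝 0] fun _ => (1 : ℝ) :=
    ContinuousAt.isBigO (by fun_prop)
  have pos := one_add_isBigO.mul_isLittleO isLittleO_log_one_add_sub
  have neg_tendsto : Tendsto (fun x : ℝ => -x) (𝓝 0) (𝓝 0) := by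
    simpa only [neg_zero] using (continuous_neg (G := ℝ)).tendsto 0
  have neg := pos.comp_tendsto neg_tendsto
  simp only [Function.comp_def, one_mul, neg_sq] at pos neg
  refine (pos.add neg).congr_left fun x => ?_
  rw [← sub_eq_add_neg]
  ring

/-- The binomial coefficient `binom(m + n, m)` in units of `2 ^ (m + n) / r`; the free factor `r` is
meant to be of the order of `√(m + n)`, the scale of the central binomial coefficients. -/
noncomputable def normalizedChoose (r : ℝ) (m n : ℕ) : ℝ :=
  (m + n).choose m * r / 2 ^ (m + n)

theorem normalizedChoose_mul_div_mul {r : ℝ} (hr : r ≠ 0) {m₁ n₁ m₂ n₂ m₃ n₃ m₄ n₄ : ℕ}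
    (h : m₁ + n₁ + (m₂ + n₂) = m₃ + n₃ + (m₄ + n₄)) :
    normalizedChoose r m₁ n₁ * normalizedChoose r m₂ n₂ /
        (normalizedChoose r m₃ n₃ * normalizedChoose r m₄ n₄) =
      (m₁ + n₁).choose m₁ * (m₂ + n₂).choose m₂ /
        ((m₃ + n₃).choose m₃ * (m₄ + n₄).choose m₄) := by
  have two_pow : (2 : ℝ) ^ (m₁ + n₁) * 2 ^ (m₂ + n₂) = 2 ^ (m₃ + n₃) * 2 ^ (m₄ + n₄) := by
    rw [← pow_add, ← pow_add, h]
  simp only [normalizedChoose]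
  rw [div_mul_div_comm, div_mul_div_comm, two_pow, div_div_div_cancel_right₀ (by positivity),
    mul_mul_mul_comm, mul_mul_mul_comm (_ : ℝ) r, mul_div_mul_right _ _ (mul_ne_zero hr hr)]

theorem factorial_eq_stirlingSeq_mul {n : ℕ} (hn : 0 < n) :
    (n.factorial : ℝ) = stirlingSeq n * (√(2 * n) * (n / exp 1) ^ n) := by
  rw [stirlingSeq, div_mul_cancel₀ _ (by positivity)]

theorem normalizedChoose_eq_stirlingSeq {m n : ℕ} (hm : 0 < m) (hn : 0 < n) :
    normalizedChoose √(π * (m + n) / 2) m n =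
      √π * stirlingSeq (m + n) / (stirlingSeq m * stirlingSeq n) /
        (√(2 * m / (m + n) * (2 * n / (m + n))) *
          ((2 * m / (m + n) : ℝ) ^ m * (2 * n / (m + n) : ℝ) ^ n)) := by
  have sqrt_ratio : √(2 * (m + n)) * √(π * (m + n) / 2) / (√(2 * m) * √(2 * n)) =
      √π / √(2 * m / (m + n) * (2 * n / (m + n))) := by
    rw [← sqrt_mul (by positivity), ← sqrt_mul (by positivity), ← sqrt_div (by positivity),
      ← sqrt_div (by positivity)]
    congr 1
    field_simp
  have pow_ratio : ((m + n) / exp 1) ^ (m + n) /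
        (2 ^ (m + n) * ((m / exp 1) ^ m * (n / exp 1) ^ n)) =
      1 / ((2 * m / (m + n) : ℝ) ^ m * (2 * n / (m + n) : ℝ) ^ n) := by
    rw [div_eq_div_iff (by positivity) (by positivity), one_mul, pow_add, pow_add,
      mul_mul_mul_comm, ← mul_pow, ← mul_pow, mul_mul_mul_comm, ← mul_pow, ← mul_pow]
    congr 2 <;> field_simp
  rw [normalizedChoose, Nat.cast_add_choose, factorial_eq_stirlingSeq_mul hm,
    factorial_eq_stirlingSeq_mul hn, factorial_eq_stirlingSeq_mul (by omega), Nat.cast_add]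
  calc
    _ = stirlingSeq (m + n) / (stirlingSeq m * stirlingSeq n) *
          (√(2 * (m + n)) * √(π * (m + n) / 2) / (√(2 * m) * √(2 * n))) *
          (((m + n) / exp 1) ^ (m + n) /
            (2 ^ (m + n) * ((m / exp 1) ^ m * (n / exp 1) ^ n))) := by ring
    _ = _ := by
      rw [sqrt_ratio, pow_ratio]
      ring

/-- The regime of the local limit theorem for `binom(m + n, m)`: for a binomial variable with
`m + n` trials and success probability `1 / 2`, the value `m` is asymptotically `√c` standard
deviations away from the mean. The deviation enters squared, so that its sign may vary. -/
structure CentralRegime {α : Type*} (l : Filter α) (m n : α → ℕ) (c : ℝ) : Prop where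
  tendsto_add : Tendsto (fun a => m a + n a) l atTop
  tendsto_sub_sq_div_add : Tendsto (fun a => ((m a : ℝ) - n a) ^ 2 / (m a + n a)) l (𝓝 c)

namespace CentralRegime

variable {α : Type*} {l : Filter α} {m n : α → ℕ} {c : ℝ}

theorem symm (h : CentralRegime l m n c) : CentralRegime l n m c where
  tendsto_add := by simpa only [add_comm] using h.tendsto_add
  tendsto_sub_sq_div_add :=
    h.tendsto_sub_sq_div_add.congr fun a => by rw [sub_sq_comm, add_comm]

theorem tendsto_cast_add (h : CentralRegime l m n c) :
    Tendsto (fun a => (m a : ℝ) + n a) l atTop := by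
  simpa only [Nat.cast_add] using tendsto_natCast_atTop_iff (R := ℝ).2 h.tendsto_add

theorem tendsto_sub_div_add (h : CentralRegime l m n c) :
    Tendsto (fun a => ((m a : ℝ) - n a) / (m a + n a)) l (𝓝 0) := by
  have sq_tendsto := h.tendsto_sub_sq_div_add.div_atTop h.tendsto_cast_add
  rw [tendsto_zero_iff_abs_tendsto_zero]
  refine (sqrt_zero ▸ sq_tendsto.sqrt).congr fun a => ?_
  rw [Function.comp_apply, ← sqrt_sq_eq_abs, div_pow, div_div, ← sq]

theorem tendsto_two_mul_div_add (h : CentralRegime l m n c) :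
    Tendsto (fun a => 2 * (m a : ℝ) / (m a + n a)) l (𝓝 1) := by
  refine (add_zero (1 : ℝ) ▸ h.tendsto_sub_div_add.const_add 1).congr' ?_
  filter_upwards [h.tendsto_cast_add.eventually_ne_atTop 0] with a ha
  field_simp
  ring

theorem tendsto_left (h : CentralRegime l m n c) : Tendsto m l atTop := by
  rw [← tendsto_natCast_atTop_iff (R := ℝ)]
  refine ((h.tendsto_cast_add.atTop_mul_pos one_pos h.tendsto_two_mul_div_add).atTop_div_const
    two_pos).congr' ?_
  filter_upwards [h.tendsto_cast_add.eventually_ne_atTop 0] with a ha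
  rw [mul_div_cancel₀ _ ha, mul_div_cancel_left₀ _ two_ne_zero]

theorem tendsto_pow_mul_pow (h : CentralRegime l m n c) :
    Tendsto (fun a => (2 * m a / (m a + n a) : ℝ) ^ m a * (2 * n a / (m a + n a) : ℝ) ^ n a)
      l (𝓝 (exp (c / 2))) := by
  set x : α → ℝ := fun a => ((m a : ℝ) - n a) / (m a + n a) with hx
  set f : ℝ → ℝ := fun x => (1 + x) * log (1 + x) + (1 - x) * log (1 - x) with hf
  -- The logarithm of the product is `(m + n) / 2 * f x`, and `f x = x ^ 2 + o(x ^ 2)`.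
  have main : Tendsto (fun a => ((m a : ℝ) + n a) * x a ^ 2) l (𝓝 c) := by
    refine h.tendsto_sub_sq_div_add.congr' ?_
    filter_upwards [h.tendsto_cast_add.eventually_ne_atTop 0] with a ha
    simp only [hx]
    field_simp
  have error : Tendsto (fun a => ((m a : ℝ) + n a) * (f (x a) - x a ^ 2)) l (𝓝 0) :=
    (isLittleO_one_iff ℝ).1 <|
      ((isBigO_refl _ _).mul_isLittleO
        (isLittleO_mul_log_add_mul_log_sub_sq.comp_tendsto
          h.tendsto_sub_div_add)).trans_isBigO (main.isBigO_one ℝ)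
  have exponent := (main.add error).div_const 2
  rw [add_zero] at exponent
  refine ((continuous_exp.tendsto _).comp exponent).congr' ?_
  filter_upwards [h.tendsto_left.eventually_gt_atTop 0,
    h.symm.tendsto_left.eventually_gt_atTop 0] with a hm hn
  have one_add : 1 + x a = 2 * m a / (m a + n a) := by
    simp only [hx]
    field_simp
    ring
  have one_sub : 1 - x a = 2 * n a / (m a + n a) := by
    simp only [hx]
    field_simp
    ring
  rw [Function.comp_apply, eq_comm, ← exp_log (mul_pos (pow_pos (by positivity) _)
    (pow_pos (by positivity) _)), log_mul (by positivity) (by positivity), log_pow, log_pow]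
  simp only [hf, one_add, one_sub]
  congr 1
  field_simp
  ring

theorem tendsto_normalizedChoose_sqrt (h : CentralRegime l m n c) :
    Tendsto (fun a => normalizedChoose √(π * (m a + n a) / 2) (m a) (n a)) l
      (𝓝 (exp (-c / 2))) := by
  have hm := h.tendsto_left
  have hn := h.symm.tendsto_left
  have stirling := ((tendsto_stirlingSeq_sqrt_pi.comp h.tendsto_add).const_mul √π).div
    ((tendsto_stirlingSeq_sqrt_pi.comp hm).mul (tendsto_stirlingSeq_sqrt_pi.comp hn))
    (by positivity)
  have two_mul_div_right : Tendsto (fun a => 2 * (n a : ℝ) / (m a + n a)) l (𝓝 1) := by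
    simpa only [add_comm] using h.symm.tendsto_two_mul_div_add
  have sqrt_tendsto := (h.tendsto_two_mul_div_add.mul two_mul_div_right).sqrt
  rw [mul_one, sqrt_one] at sqrt_tendsto
  have quotient := stirling.div (sqrt_tendsto.mul h.tendsto_pow_mul_pow) (by positivity)
  rw [div_self (by positivity), one_mul, one_div, ← exp_neg, ← neg_div] at quotient
  refine quotient.congr' ?_
  filter_upwards [hm.eventually_gt_atTop 0, hn.eventually_gt_atTop 0] with a hma hna
  exact (normalizedChoose_eq_stirlingSeq hma hna).symm

end CentralRegime

section Scale

variable {α : Type*} {l : Filter α} {m n : α → ℕ} {r : α → ℝ} {D δ : ℝ}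

theorem CentralRegime.of_tendsto_div (hD : 0 < D) (hr : Tendsto r l atTop)
    (hadd : Tendsto (fun a => ((m a : ℝ) + n a) / r a ^ 2) l (𝓝 D))
    (hsub : Tendsto (fun a => ((m a : ℝ) - n a) / r a) l (𝓝 δ)) :
    CentralRegime l m n (δ ^ 2 / D) where
  tendsto_add := by
    rw [← tendsto_natCast_atTop_iff (R := ℝ)]
    refine (((tendsto_pow_atTop two_ne_zero).comp hr).atTop_mul_pos hD hadd).congr' ?_
    filter_upwards [hr.eventually_ne_atTop 0] with a ha
    rw [Function.comp_apply, mul_div_cancel₀ _ (pow_ne_zero 2 ha), Nat.cast_add]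
  tendsto_sub_sq_div_add := by
    refine ((hsub.pow 2).div hadd hD.ne').congr' ?_
    filter_upwards [hr.eventually_ne_atTop 0] with a ha
    simp only [Pi.div_apply]
    rw [div_pow, div_div_div_cancel_right₀ (pow_ne_zero 2 ha)]

theorem tendsto_normalizedChoose (hD : 0 < D) (hr : Tendsto r l atTop)
    (hadd : Tendsto (fun a => ((m a : ℝ) + n a) / r a ^ 2) l (𝓝 D))
    (hsub : Tendsto (fun a => ((m a : ℝ) - n a) / r a) l (𝓝 δ)) :
    Tendsto (fun a => normalizedChoose (r a) (m a) (n a)) l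
      (𝓝 (exp (-(δ ^ 2 / D) / 2) / √(π / 2 * D))) := by
  have central := CentralRegime.of_tendsto_div hD hr hadd hsub
  refine (central.tendsto_normalizedChoose_sqrt.div (hadd.const_mul (π / 2)).sqrt
    (by positivity)).congr' ?_
  filter_upwards [hr.eventually_gt_atTop 0, central.tendsto_cast_add.eventually_gt_atTop 0]
    with a ha hmn
  have sqrt_eq : √(π * (m a + n a) / 2) = r a * √(π / 2 * ((m a + n a) / r a ^ 2)) := by
    rw [← sqrt_sq ha.le, ← sqrt_mul (by positivity), sqrt_sq ha.le]
    congr 1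
    field_simp
  simp only [Pi.div_apply, normalizedChoose, sqrt_eq]
  field_simp

end Scale

theorem tendsto_linear_div (p q : ℝ) :
    Tendsto (fun x : ℝ => (p * x + q) / x) atTop (𝓝 p) := by
  have h := (tendsto_inv_atTop_zero.const_mul q).const_add p
  rw [mul_zero, add_zero] at h
  refine h.congr' ?_
  filter_upwards [eventually_ne_atTop 0] with x hx
  field_simp

theorem tendsto_quadratic_div_sq (p q s : ℝ) :
    Tendsto (fun x : ℝ => (p * x ^ 2 + q * x + s) / x ^ 2) atTop (𝓝 p) := by
  have h := (tendsto_linear_div p q).add ((tendsto_inv_atTop_zero.pow 2).const_mul s)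
  rw [zero_pow two_ne_zero, mul_zero, add_zero] at h
  refine h.congr' ?_
  filter_upwards [eventually_ne_atTop 0] with x hx
  field_simp

theorem tendsto_normalizedChoose_of_quadratic {m n : ℕ → ℕ} {D p q s t : ℝ} (hD : 0 < D)
    (hm : ∀ᶠ a in atTop, (m a : ℝ) = D * a ^ 2 + p * a + q)
    (hn : ∀ᶠ a in atTop, (n a : ℝ) = D * a ^ 2 + s * a + t) :
    Tendsto (fun a : ℕ => normalizedChoose a (m a) (n a)) atTop
      (𝓝 (exp (-(p - s) ^ 2 / (4 * D)) / √(π * D))) := by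
  rw [show -(p - s) ^ 2 / (4 * D) = -((p - s) ^ 2 / (2 * D)) / 2 by ring,
    show π * D = π / 2 * (2 * D) by ring]
  refine tendsto_normalizedChoose (by positivity) tendsto_natCast_atTop_atTop
    (((tendsto_quadratic_div_sq (2 * D) (p + s) (q + t)).comp
      tendsto_natCast_atTop_atTop).congr' ?_)
    (((tendsto_linear_div (p - s) (q - t)).comp tendsto_natCast_atTop_atTop).congr' ?_)
  all_goals
    filter_upwards [hm, hn] with a hma hna
    rw [hma, hna, Function.comp_apply]
    ring

theorem binRatio_eq_normalizedChoose {a : ℕ} (ha : 2 ≤ a) :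
    binRatio a =
      normalizedChoose a (4 * a ^ 2 - 1) (4 * a ^ 2) *
          normalizedChoose a (4 * a ^ 2 - 1) (4 * a ^ 2 - 4) /
        (normalizedChoose a (4 * a ^ 2 + a - 1) (4 * a ^ 2 + a) *
          normalizedChoose a (4 * a ^ 2 + a - 1) (4 * a ^ 2 - 3 * a - 4)) := by
  have two_mul_le : 2 * a ≤ a ^ 2 := by nlinarith
  rw [normalizedChoose_mul_div_mul (by positivity) (by omega), binRatio]
  congr <;> omega

theorem tendsto_binRatio : Tendsto binRatio atTop (𝓝 (exp 1)) := by
  have cast_quadratic {m : ℕ → ℕ} (p q : ℤ)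
      (hm : ∀ a, 2 * a ≤ a ^ 2 → 2 ≤ a → (m a : ℤ) = 4 * (a ^ 2 : ℕ) + p * a + q) :
      ∀ᶠ a in atTop, (m a : ℝ) = 4 * a ^ 2 + p * a + q := by
    filter_upwards [eventually_ge_atTop 2] with a ha
    exact_mod_cast hm a (by nlinarith) ha
  have sub_one := cast_quadratic (m := fun a => 4 * a ^ 2 - 1) 0 (-1) (by grind)
  have self := cast_quadratic (m := fun a => 4 * a ^ 2) 0 0 (by grind)
  have sub_four := cast_quadratic (m := fun a => 4 * a ^ 2 - 4) 0 (-4) (by grind)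
  have add_sub_one := cast_quadratic (m := fun a => 4 * a ^ 2 + a - 1) 1 (-1) (by grind)
  have add_self := cast_quadratic (m := fun a => 4 * a ^ 2 + a) 1 0 (by grind)
  have sub_three_mul := cast_quadratic (m := fun a => 4 * a ^ 2 - 3 * a - 4) (-3) (-4) (by grind)
  have ratio :=
    ((tendsto_normalizedChoose_of_quadratic four_pos sub_one self).mul
      (tendsto_normalizedChoose_of_quadratic four_pos sub_one sub_four)).div
    ((tendsto_normalizedChoose_of_quadratic four_pos add_sub_one add_self).mul
      (tendsto_normalizedChoose_of_quadratic four_pos add_sub_one sub_three_mul)) (by positivity)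
  have limit_eq : exp 0 / √(π * 4) * (exp 0 / √(π * 4)) /
      (exp 0 / √(π * 4) * (exp (-1) / √(π * 4))) = exp 1 := by
    field_simp
    norm_num [exp_neg]
  norm_num only at ratio
  rw [limit_eq] at ratio
  refine ratio.congr' ?_
  filter_upwards [eventually_ge_atTop 2] with a ha
  exact (binRatio_eq_normalizedChoose ha).symm

theorem tendsto_cube_mul_prefactor : Tendsto (fun a : ℕ => (a : ℝ) ^ 3 *
    (((32 * (a : ℝ) ^ 2 * ((a : ℝ) ^ 2 - 1) - 6) * (4 * (a : ℝ) + 1) / (4 * (a : ℝ))) /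
      ((4 * (a : ℝ) ^ 2 + 2) * (4 * (a : ℝ) ^ 2 + 1) * (4 * (a : ℝ) ^ 2 - 3) * ((a : ℝ) + 1))))
    atTop (𝓝 (1 / 2)) := by
  -- The expression in the variable `x = 1 / a`.
  have continuousAt_zero : ContinuousAt (fun x : ℝ => ((32 * (1 - x ^ 2) - 6 * x ^ 4) *
      (4 + x) / 4) / ((4 + 2 * x ^ 2) * (4 + x ^ 2) * (4 - 3 * x ^ 2) * (1 + x))) 0 :=
    .div (by fun_prop) (by fun_prop) (by norm_num)
  have h := continuousAt_zero.tendsto.comp (tendsto_inv_atTop_nhds_zero_nat (𝕜 := ℝ))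
  norm_num only at h
  refine h.congr' ?_
  filter_upwards [eventually_ne_atTop 0] with a ha
  rw [Function.comp_apply]
  field_simp

/-- With `α = 1/a`, as `a → ∞`: `R(a) = (e/2)α³ + o(α³)`, where `e` is Euler's number. -/
theorem stmt18 :
    (fun a : ℕ => Rfn a - (Real.exp 1 / 2) / (a : ℝ) ^ 3)
      =o[atTop] (fun a : ℕ => 1 / (a : ℝ) ^ 3) := by
  rw [isLittleO_iff_tendsto']
  · have limit_eq : 1 / 2 * Real.exp 1 - Real.exp 1 / 2 = 0 := by ring
    have h := (tendsto_cube_mul_prefactor.mul tendsto_binRatio).sub_const (Real.exp 1 / 2)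
    rw [limit_eq] at h
    refine h.congr' ?_
    filter_upwards [eventually_gt_atTop 0] with a ha
    have h0 : (a : ℝ) ≠ 0 := by positivity
    rw [div_div_eq_mul_div, div_one, sub_mul (Rfn a), div_mul_cancel₀ _ (pow_ne_zero 3 h0), Rfn]
    ring
  · filter_upwards [eventually_gt_atTop 0] with a ha h
    have : (0 : ℝ) < 1 / (a : ℝ) ^ 3 := by positivity
    exact absurd h this.ne'
end

section
/- As the positive integer a → ∞, the ratio of binomial coefficients binom(8a²−1, 4a²−1) · binom(8a²−5, 4a²−1) / ( binom(8a²+2a−1, 4a²+a−1) · binom(8a²−2a−5, 4a²+a−1) ) converges to Euler's number e. -/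
open Filter

/-!
By Stirling's formula, `N.choose k` is asymptotic to `exp (N * H (k / N))` divided by
`√(2 * π * k * (N - k) / N)`, where `H` is the binary entropy. Expanding `H` to second order around
`p` gives the local de Moivre–Laplace theorem; for `p = 1 / 2` it says that `N.choose k` behaves
like `2 ^ N * exp (-(2 * k - N) ^ 2 / (2 * N)) / √(π * N / 2)` as long as `2 * k - N` is of order
at most `√N`.

Put `n = 4 * a ^ 2`. The upper indices of the numerator and of the denominator both add up to
`4 * n - 6`, so the powers of `2` cancel, and so do the square roots, as every upper index is
asymptotic to `2 * n`. Of the four coefficients only `(2 * n - 2 * a - 5).choose (n + a - 1)` is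
off centre at the scale `√n`: there `2 * k - N = 4 * a + 3`, and its Gaussian factor tends to
`exp (-4 * c ^ 2)`, where `c = lim a / √n = 1 / 2`.
-/

section
open Asymptotics Real
open scoped Topology Nat

variable {ι : Type*} {f : Filter ι}

lemma binEntropy_sub_taylor_two_isLittleO {p : ℝ} (hp₀ : 0 < p) (hp₁ : p < 1) :
    (fun q ↦ binEntropy q - (binEntropy p + (log (1 - p) - log p) * (q - p) -
      (q - p) ^ 2 / (2 * (p * (1 - p))))) =o[𝓝 p] fun q ↦ (q - p) ^ 2 := by
  have hq₁ : 0 < 1 - p := sub_pos.2 hp₁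
  have hderiv : ∀ q ∈ Set.Ioo (0 : ℝ) 1, HasDerivWithinAt
      (fun q ↦ binEntropy q - (log (1 - p) - log p) * (q - p) + (q - p) ^ 2 / (2 * (p * (1 - p))))
      (log (1 - q) - log q - (log (1 - p) - log p) + (q - p) / (p * (1 - p)))
      (Set.Ioo 0 1) q := by
    intro q hq
    have hid := (hasDerivAt_id q).sub_const p
    have := ((hasDerivAt_binEntropy hq.1.ne' hq.2.ne).sub (hid.const_mul (log (1 - p) - log p))).add
      ((hid.pow 2).div_const (2 * (p * (1 - p))))
    refine (this.congr_deriv ?_).hasDerivWithinAt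
    simp only [id_eq]
    field
  have hderiv₂ : HasDerivAt
      (fun q ↦ log (1 - q) - log q - (log (1 - p) - log p) + (q - p) / (p * (1 - p))) 0 p := by
    have hid := hasDerivAt_id p
    refine (((((hid.const_sub 1).log hq₁.ne').sub (hid.log hp₀.ne')).sub_const _).add
      ((hid.sub_const p).div_const (p * (1 - p)))).congr_deriv ?_
    simp only [id_eq]
    field
  have hsmall : (fun q ↦ log (1 - q) - log q - (log (1 - p) - log p) + (q - p) / (p * (1 - p)))
      =o[𝓝[Set.Ioo 0 1] p] fun q ↦ (q - p) ^ 1 := by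
    simpa using hderiv₂.isLittleO.mono nhdsWithin_le_nhds
  have h := (convex_Ioo 0 1).isLittleO_pow_succ_real ⟨hp₀, hp₁⟩ hderiv hsmall
  rw [isOpen_Ioo.nhdsWithin_eq ⟨hp₀, hp₁⟩] at h
  refine h.congr_left fun q ↦ ?_
  ring

lemma exp_add_mul_binEntropy {k l : ℕ} (hk : k ≠ 0) (hl : l ≠ 0) :
    exp ((k + l) * binEntropy (k / (k + l))) = (k + l : ℝ) ^ (k + l) / (k ^ k * l ^ l) := by
  have hl' : (1 - k / (k + l) : ℝ) = l / (k + l) := by field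
  have hexp : (k + l) * binEntropy (k / (k + l)) =
      (k : ℝ) * log ((k + l) / k) + l * log ((k + l) / l) := by
    rw [binEntropy, hl', inv_div, inv_div]
    field
  rw [hexp, exp_add, exp_nat_mul, exp_nat_mul, exp_log (by positivity), exp_log (by positivity)]
  rw [div_pow, div_pow, div_mul_div_comm, ← pow_add]

lemma choose_isEquivalent_exp_binEntropy {k l : ι → ℕ}
    (hk : Tendsto k f atTop) (hl : Tendsto l f atTop) :
    (fun i ↦ ((k i + l i).choose (k i) : ℝ)) ~[f] fun i ↦
      exp ((k i + l i) * binEntropy (k i / (k i + l i))) /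
        √(2 * π * (k i * l i / (k i + l i))) := by
  have stirling := Stirling.factorial_isEquivalent_stirling
  have h := (stirling.comp_tendsto (hk.atTop_add_atTop hl)).div
    ((stirling.comp_tendsto hk).mul (stirling.comp_tendsto hl))
  refine (h.congr_left (.of_forall fun i ↦ ?_)).congr_right ?_
  · exact (Nat.cast_add_choose ℝ).symm
  filter_upwards [hk.eventually_ne_atTop 0, hl.eventually_ne_atTop 0] with i hki hli
  have hsqrt : √(2 * (k i + l i) * π) / (√(2 * k i * π) * √(2 * l i * π)) =
      1 / √(2 * π * (k i * l i / (k i + l i))) := by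
    rw [← sqrt_mul (by positivity), ← sqrt_div (by positivity), ← sqrt_one, ← sqrt_div one_pos.le]
    congr 1
    field
  have hpow : ((k i + l i : ℝ) / exp 1) ^ (k i + l i) /
      ((k i / exp 1) ^ k i * (l i / exp 1) ^ l i) =
      exp ((k i + l i) * binEntropy (k i / (k i + l i))) := by
    rw [exp_add_mul_binEntropy hki hli, pow_add, div_pow, div_pow, div_pow, div_pow, pow_add]
    field
  simp only [Pi.div_apply, Pi.mul_apply, Function.comp_apply, Nat.cast_add]
  rw [mul_mul_mul_comm, mul_div_mul_comm, hsqrt, hpow, one_div_mul_eq_div]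

lemma tendsto_of_tendsto_sqrt_mul_sub {p x : ℝ} {n q : ι → ℝ} (hn : Tendsto n f atTop)
    (hq : Tendsto (fun i ↦ √(n i) * (q i - p)) f (𝓝 x)) : Tendsto q f (𝓝 p) := by
  have hsqrt : Tendsto (fun i ↦ √(n i)) f atTop := tendsto_sqrt_atTop.comp hn
  have h := (hq.div_atTop hsqrt).add_const p
  rw [zero_add] at h
  refine h.congr' ?_
  filter_upwards [hsqrt.eventually_ne_atTop 0] with i hi
  field

lemma tendsto_mul_binEntropy_add {p x : ℝ} (hp₀ : 0 < p) (hp₁ : p < 1) {n q : ι → ℝ}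
    (hn : Tendsto n f atTop) (hq : Tendsto (fun i ↦ √(n i) * (q i - p)) f (𝓝 x)) :
    Tendsto (fun i ↦ n i * (binEntropy (q i) + q i * log p + (1 - q i) * log (1 - p))) f
      (𝓝 (-x ^ 2 / (2 * (p * (1 - p))))) := by
  have hsq : Tendsto (fun i ↦ n i * (q i - p) ^ 2) f (𝓝 (x ^ 2)) := by
    refine (hq.pow 2).congr' ?_
    filter_upwards [hn.eventually_ge_atTop 0] with i hi
    rw [mul_pow, sq_sqrt hi]
  have htaylor := (binEntropy_sub_taylor_two_isLittleO hp₀ hp₁).comp_tendsto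
    (tendsto_of_tendsto_sqrt_mul_sub hn hq)
  have hremainder := (isLittleO_one_iff ℝ).1
    (((isBigO_refl n f).mul_isLittleO htaylor).trans_isBigO (hsq.isBigO_one ℝ))
  have h := hremainder.add (hsq.neg.div_const (2 * (p * (1 - p))))
  rw [zero_add] at h
  refine h.congr fun i ↦ ?_
  simp only [Function.comp_apply, binEntropy_eq_negMulLog_add_negMulLog_one_sub p, negMulLog]
  ring

lemma exp_mul_binEntropy_add {p : ℝ} (hp₀ : 0 < p) (hp₁ : p < 1) {k l : ℕ} (hkl : k + l ≠ 0) :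
    exp ((k + l) * (binEntropy (k / (k + l)) + k / (k + l) * log p +
      (1 - k / (k + l)) * log (1 - p))) =
      exp ((k + l) * binEntropy (k / (k + l))) * (p ^ k * (1 - p) ^ l) := by
  have hn : (k + l : ℝ) ≠ 0 := mod_cast hkl
  have hexp : (k + l) * (binEntropy (k / (k + l)) + k / (k + l) * log p +
      (1 - k / (k + l)) * log (1 - p)) =
      (k + l) * binEntropy (k / (k + l)) + (k * log p + l * log (1 - p)) := by
    field
  rw [hexp, exp_add, exp_add, exp_nat_mul, exp_nat_mul, exp_log hp₀, exp_log (sub_pos.2 hp₁)]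

theorem tendsto_choose_mul_pow_mul_sqrt {p x : ℝ} (hp₀ : 0 < p) (hp₁ : p < 1) {k l : ι → ℕ}
    (hkl : Tendsto (fun i ↦ k i + l i) f atTop)
    (hx : Tendsto (fun i ↦ (k i - p * (k i + l i)) / √(k i + l i)) f (𝓝 x)) :
    Tendsto (fun i ↦ (k i + l i).choose (k i) * (p ^ k i * (1 - p) ^ l i * √(k i + l i))) f
      (𝓝 (exp (-x ^ 2 / (2 * (p * (1 - p)))) / √(2 * π * (p * (1 - p))))) := by
  have hp₁' : 0 < 1 - p := sub_pos.2 hp₁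
  have hn : Tendsto (fun i ↦ (k i + l i : ℝ)) f atTop := by
    simpa only [Function.comp_def, Nat.cast_add] using tendsto_natCast_atTop_atTop.comp hkl
  have hn_pos := hn.eventually_gt_atTop 0
  have hq : Tendsto (fun i ↦ √(k i + l i) * (k i / (k i + l i) - p : ℝ)) f (𝓝 x) := by
    refine hx.congr' ?_
    filter_upwards [hn_pos] with i hi
    rw [div_sub' hi.ne', mul_div_left_comm, sqrt_div_self', mul_one_div, mul_comm p]
  have hqp := tendsto_of_tendsto_sqrt_mul_sub hn hq
  have hqp' : Tendsto (fun i ↦ (l i / (k i + l i) : ℝ)) f (𝓝 (1 - p)) := by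
    refine (hqp.const_sub 1).congr' ?_
    filter_upwards [hn_pos] with i hi
    field
  have hk : Tendsto k f atTop := tendsto_natCast_atTop_iff.1 (hn.num hp₀ hqp)
  have hl : Tendsto l f atTop := tendsto_natCast_atTop_iff.1 (hn.num hp₁' hqp')
  have hgauss := (tendsto_mul_binEntropy_add hp₀ hp₁ hn hq).rexp.div
    ((hqp.mul hqp').const_mul (2 * π)).sqrt (by positivity)
  refine ((choose_isEquivalent_exp_binEntropy hk hl).mul .refl).symm.tendsto_nhds
    (hgauss.congr' ?_)
  filter_upwards [hn_pos] with i hi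
  have hsqrt : √(2 * π * (k i * l i / (k i + l i))) =
      √(k i + l i) * √(2 * π * (k i / (k i + l i) * (l i / (k i + l i)))) := by
    rw [← sqrt_mul hi.le]
    congr 1
    field
  have := (sqrt_pos.2 hi).ne'
  simp only [Pi.div_apply, Pi.mul_apply]
  rw [exp_mul_binEntropy_add hp₀ hp₁ (mod_cast hi.ne'), hsqrt]
  field

theorem tendsto_choose_mul_sqrt_div_two_pow {n : ι → ℝ} {k l : ι → ℕ} {α β : ℝ}
    (hn : Tendsto n f atTop) (hk : Tendsto (fun i ↦ (k i - n i) / √(n i)) f (𝓝 α))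
    (hl : Tendsto (fun i ↦ (l i - n i) / √(n i)) f (𝓝 β)) :
    Tendsto (fun i ↦ (k i + l i).choose (k i) * √(n i) / 2 ^ (k i + l i)) f
      (𝓝 (exp (-(α - β) ^ 2 / 4) / √π)) := by
  have hn_pos := hn.eventually_gt_atTop 0
  have hsqrt : Tendsto (fun i ↦ √(n i)) f atTop := tendsto_sqrt_atTop.comp hn
  have hsum : Tendsto (fun i ↦ (k i + l i) / n i) f (𝓝 2) := by
    have h := ((hk.add hl).div_atTop hsqrt).add_const 2
    rw [zero_add] at h
    refine h.congr' ?_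
    filter_upwards [hn_pos] with i hi
    rw [← add_div, div_div, mul_self_sqrt hi.le]
    field
  have hratio : Tendsto (fun i ↦ √(k i + l i) / √(n i)) f (𝓝 √2) := by
    refine hsum.sqrt.congr fun i ↦ ?_
    rw [sqrt_div (by positivity)]
  have hkl : Tendsto (fun i ↦ k i + l i) f atTop := by
    refine tendsto_natCast_atTop_iff.1 (hn.num two_pos ?_)
    simpa only [Nat.cast_add] using hsum
  have hx : Tendsto (fun i ↦ (k i - 1 / 2 * (k i + l i)) / √(k i + l i)) f
      (𝓝 ((α - β) / 2 / √2)) := by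
    refine (((hk.sub hl).div_const 2).div hratio (by positivity)).congr' ?_
    filter_upwards [hn_pos] with i hi
    have := (sqrt_pos.2 hi).ne'
    rw [Pi.div_apply]
    field
  convert! ((tendsto_choose_mul_pow_mul_sqrt (by norm_num) (by norm_num) hkl hx).div hratio
    (by positivity)).congr' ?_ using 2
  · rw [div_div, ← sqrt_mul (by positivity)]
    congr 2
    · rw [div_pow, sq_sqrt two_pos.le]
      ring
    · ring
  filter_upwards [hn_pos, hkl.eventually_gt_atTop 0] with i hi hi'
  have := (sqrt_pos.2 hi).ne'
  have hkl_pos : (0 : ℝ) < k i + l i := mod_cast hi'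
  have := (sqrt_pos.2 hkl_pos).ne'
  rw [Pi.div_apply, sub_half, ← pow_add, one_div_pow]
  field

lemma tendsto_sub_div_sqrt_of_eq_add_mul_add {n a k : ι → ℝ} {c u v : ℝ} (hn : Tendsto n f atTop)
    (ha : Tendsto (fun i ↦ a i / √(n i)) f (𝓝 c)) (hk : ∀ᶠ i in f, k i = n i + u * a i + v) :
    Tendsto (fun i ↦ (k i - n i) / √(n i)) f (𝓝 (u * c)) := by
  have h := (ha.const_mul u).add
    (tendsto_const_nhds.div_atTop (tendsto_sqrt_atTop.comp hn) (a := v))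
  rw [add_zero] at h
  refine h.congr' ?_
  filter_upwards [hk] with i hi
  rw [hi, Function.comp_apply]
  ring

lemma eventually_mul_add_lt_of_tendsto_div_sqrt {n a : ι → ℝ} {c : ℝ} (hn : Tendsto n f atTop)
    (ha : Tendsto (fun i ↦ a i / √(n i)) f (𝓝 c)) (u v : ℝ) :
    ∀ᶠ i in f, u * a i + v < n i := by
  have h := (tendsto_sub_div_sqrt_of_eq_add_mul_add (u := u) (v := v) hn ha
    (.of_forall fun _ ↦ rfl)).div_atTop (tendsto_sqrt_atTop.comp hn)
  filter_upwards [hn.eventually_gt_atTop 0, h.eventually_lt_const one_pos] with i hi hlt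
  rw [Function.comp_apply, div_div, mul_self_sqrt hi.le, div_lt_one hi] at hlt
  linarith

lemma tendsto_choose_mul_sqrt_div_two_pow_of_affine {n a N k : ι → ℕ} {c : ℝ} {u v w z : ℤ}
    (hn : Tendsto n f atTop) (ha : Tendsto (fun i ↦ a i / √(n i)) f (𝓝 c))
    (hN : ∀ᶠ i in f, (N i : ℤ) = 2 * n i + w * a i + z)
    (hk : ∀ᶠ i in f, (k i : ℤ) = n i + u * a i + v) :
    Tendsto (fun i ↦ (N i).choose (k i) * √(n i) / 2 ^ N i) f
      (𝓝 (exp (-((2 * u - w) * c) ^ 2 / 4) / √π)) := by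
  have hn' : Tendsto (fun i ↦ (n i : ℝ)) f atTop := tendsto_natCast_atTop_iff.2 hn
  have hk' : ∀ᶠ i in f, (k i : ℝ) = n i + u * a i + v := hk.mono fun i hi ↦ mod_cast hi
  have hN' : ∀ᶠ i in f, (N i : ℝ) = 2 * n i + w * a i + z := hN.mono fun i hi ↦ mod_cast hi
  have hle : ∀ᶠ i in f, k i ≤ N i := by
    filter_upwards [hk', hN', eventually_mul_add_lt_of_tendsto_div_sqrt hn' ha (u - w) (v - z)]
      with i hki hNi hlt
    have : (k i : ℝ) ≤ N i := by linarith
    exact_mod_cast this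
  have hl' : ∀ᶠ i in f, ((N i - k i : ℕ) : ℝ) = n i + (w - u : ℝ) * a i + (z - v : ℝ) := by
    filter_upwards [hk', hN', hle] with i hki hNi hlei
    rw [Nat.cast_sub hlei, hki, hNi]
    ring
  have h := tendsto_choose_mul_sqrt_div_two_pow hn'
    (tendsto_sub_div_sqrt_of_eq_add_mul_add hn' ha hk')
    (tendsto_sub_div_sqrt_of_eq_add_mul_add hn' ha hl')
  rw [← sub_mul, sub_sub_eq_add_sub, ← two_mul] at h
  refine h.congr' ?_
  filter_upwards [hle] with i hi
  rw [Nat.add_sub_cancel' hi]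

theorem stmt19_general {n a : ι → ℕ} {c : ℝ} (hn : Tendsto n f atTop)
    (ha : Tendsto (fun i ↦ a i / √(n i)) f (𝓝 c)) :
    Tendsto
      (fun i ↦
        (((2 * n i - 1).choose (n i - 1) : ℝ) * ((2 * n i - 5).choose (n i - 1) : ℝ)) /
          (((2 * n i + 2 * a i - 1).choose (n i + a i - 1) : ℝ) *
            ((2 * n i - 2 * a i - 5).choose (n i + a i - 1) : ℝ)))
      f (𝓝 (exp (4 * c ^ 2))) := by
  have hle : ∀ᶠ i in f, a i + 5 ≤ n i := by
    filter_upwards [eventually_mul_add_lt_of_tendsto_div_sqrt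
      (tendsto_natCast_atTop_iff.2 hn) ha 1 5] with i hi
    rw [one_mul] at hi
    exact_mod_cast hi.le
  have hlimit (N k : ι → ℕ) (w z u v : ℤ) (h : ∀ i, a i + 5 ≤ n i →
      (N i : ℤ) = 2 * n i + w * a i + z ∧ (k i : ℤ) = n i + u * a i + v) :=
    tendsto_choose_mul_sqrt_div_two_pow_of_affine hn ha
      (hle.mono fun i hi ↦ (h i hi).1) (hle.mono fun i hi ↦ (h i hi).2)
  have h₁ := hlimit (fun i ↦ 2 * n i - 1) (fun i ↦ n i - 1) 0 (-1) 0 (-1) (by lia)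
  have h₂ := hlimit (fun i ↦ 2 * n i - 5) (fun i ↦ n i - 1) 0 (-5) 0 (-1) (by lia)
  have h₃ := hlimit (fun i ↦ 2 * n i + 2 * a i - 1) (fun i ↦ n i + a i - 1)
    2 (-1) 1 (-1) (by lia)
  have h₄ := hlimit (fun i ↦ 2 * n i - 2 * a i - 5) (fun i ↦ n i + a i - 1)
    (-2) (-5) 1 (-1) (by lia)
  convert! ((h₁.mul h₂).div (h₃.mul h₄) (by positivity)).congr' ?_ using 2
  · rw [div_mul_div_comm, div_mul_div_comm, div_div_div_cancel_right₀ (by positivity),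
      ← exp_add, ← exp_add, ← exp_sub]
    congr 1
    push_cast
    ring
  filter_upwards [hle, hn.eventually_gt_atTop 0] with i hi hpos
  have hpow : (2 : ℝ) ^ (2 * n i - 1) * 2 ^ (2 * n i - 5) =
      2 ^ (2 * n i + 2 * a i - 1) * 2 ^ (2 * n i - 2 * a i - 5) := by
    rw [← pow_add, ← pow_add]
    congr 1
    lia
  have hsqrt : √(n i : ℝ) ≠ 0 := by positivity
  rw [Pi.div_apply, div_mul_div_comm, div_mul_div_comm, hpow,
    div_div_div_cancel_right₀ (by positivity)]
  field

lemma tendsto_natCast_div_sqrt_mul_sq (d : ℝ) :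
    Tendsto (fun a : ℕ ↦ (a / √(d * a ^ 2) : ℝ)) atTop (𝓝 (1 / √d)) := by
  refine tendsto_const_nhds.congr' ?_
  filter_upwards [eventually_ne_atTop 0] with a ha
  rw [sqrt_mul' d (sq_nonneg _), sqrt_sq a.cast_nonneg]
  field

end

/-- As the positive integer `a → ∞`, the ratio of binomial coefficients
`binom(8a²−1, 4a²−1) binom(8a²−5, 4a²−1) / (binom(8a²+2a−1, 4a²+a−1) binom(8a²−2a−5, 4a²+a−1))`
converges to Euler's number `e`. -/
theorem stmt19 :
    Tendsto
      (fun a : ℕ =>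
        ((Nat.choose (8 * a ^ 2 - 1) (4 * a ^ 2 - 1) : ℝ) *
            (Nat.choose (8 * a ^ 2 - 5) (4 * a ^ 2 - 1) : ℝ)) /
          ((Nat.choose (8 * a ^ 2 + 2 * a - 1) (4 * a ^ 2 + a - 1) : ℝ) *
            (Nat.choose (8 * a ^ 2 - 2 * a - 5) (4 * a ^ 2 + a - 1) : ℝ)))
      atTop (nhds (Real.exp 1)) := by
  have hn : Tendsto (fun a : ℕ ↦ 4 * a ^ 2) atTop atTop :=
    (tendsto_pow_atTop two_ne_zero).const_mul_atTop' four_pos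
  convert stmt19_general hn (mod_cast tendsto_natCast_div_sqrt_mul_sq 4) using 5 <;> norm_num <;>
    ring_nf
end
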